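/- Short-time expansion of the heat semigroup recovers the Dirichlet energy: for every Schwartz function f : ℝ^d → ℝ, lim_{τ→0⁺} ( ‖K_{τ/2} * f‖²_{L²(ℝ^d)} - ‖f‖²_{L²(ℝ^d)} ) / τ = -‖∇f‖²_{L²(ℝ^d)}. -/

import Mathlib

open MeasureTheory Filter
open scoped Topology

/-- The heat kernel `K_t(x) = (4πt)^{-d/2} exp(-|x|²/(4t))` on `ℝ^d`. -/
noncomputable def heatKernel (d : ℕ) (t : ℝ) (x : EuclideanSpace ℝ (Fin d)) : ℝ :=
  (4 * Real.pi * t) ^ (-(d : ℝ) / 2) * Real.exp (-‖x‖ ^ 2 / (4 * t))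

/-- The heat semigroup `e^{tΔ} f = K_t * f` (convolution). -/
noncomputable def heatConv (d : ℕ) (t : ℝ) (u : EuclideanSpace ℝ (Fin d) → ℝ) :
    EuclideanSpace ℝ (Fin d) → ℝ :=
  fun x => ∫ y, heatKernel d t (x - y) * u y

open FourierTransform LineDeriv in
lemma gaussian_temperate {d : ℕ} (a : ℝ) (ha : 0 ≤ a) :
    (fun ξ : EuclideanSpace ℝ (Fin d) => Real.exp (-a * ‖ξ‖ ^ 2)).HasTemperateGrowth := by
  have h1 : (fun ξ : EuclideanSpace ℝ (Fin d) => -a * ‖ξ‖ ^ 2).HasTemperateGrowth := by fun_prop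
  have hu : UniqueDiffOn ℝ (Set.Iio (1:ℝ)) := isOpen_Iio.uniqueDiffOn
  refine Function.HasTemperateGrowth.comp' (g := Real.exp) (t := Set.Iio 1) ?_ hu
    Real.contDiff_exp.contDiffOn ?_ h1
  · rintro _ ⟨x, rfl⟩
    have : 0 ≤ a * ‖x‖ ^ 2 := by positivity
    simp only [Set.mem_Iio]
    linarith
  · intro N
    refine ⟨0, Real.exp 1, (Real.exp_pos 1).le, fun n _ x hx => ?_⟩
    rw [norm_iteratedFDerivWithin_eq_norm_iteratedDerivWithin,
      iteratedDerivWithin_eq_iteratedDeriv hu Real.contDiff_exp.contDiffAt hx,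
      iteratedDeriv_eq_iterate, Real.iter_deriv_exp]
    simpa using (le_of_lt hx)

/-- complexification -/
noncomputable def cplx {d : ℕ} (f : SchwartzMap (EuclideanSpace ℝ (Fin d)) ℝ) :
    SchwartzMap (EuclideanSpace ℝ (Fin d)) ℂ := f.postcompCLM Complex.ofRealCLM

lemma cplx_apply {d : ℕ} (f : SchwartzMap (EuclideanSpace ℝ (Fin d)) ℝ)
    (x : EuclideanSpace ℝ (Fin d)) : cplx f x = (f x : ℂ) := rfl

open FourierTransform LineDeriv in
lemma norm_sq_eq {d : ℕ} (f : SchwartzMap (EuclideanSpace ℝ (Fin d)) ℝ) :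
    ∫ x, (f x) ^ 2 = ∫ ξ, ‖𝓕 (cplx f) ξ‖ ^ 2 := by
  rw [SchwartzMap.integral_norm_sq_fourier]
  simp [cplx_apply]

open FourierTransform LineDeriv in
lemma grad_eq {d : ℕ} (f : SchwartzMap (EuclideanSpace ℝ (Fin d)) ℝ) :
    ∫ x, ‖gradient (⇑f) x‖ ^ 2 =
      ∫ ξ, (4 * Real.pi ^ 2 * ‖ξ‖ ^ 2) * ‖𝓕 (cplx f) ξ‖ ^ 2 := by
  let e : Fin d → EuclideanSpace ℝ (Fin d) := fun i => EuclideanSpace.single i 1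
  have hint : ∀ g : SchwartzMap (EuclideanSpace ℝ (Fin d)) ℂ, Integrable (fun x => ‖g x‖ ^ 2) :=
    fun g => (g.memLp 2).integrable_norm_pow (by norm_num)
  have h1 : ∀ x, ‖gradient (⇑f) x‖ ^ 2 = ∑ i, ‖(∂_{e i} (cplx f)) x‖ ^ 2 := by
    intro x
    rw [EuclideanSpace.norm_sq_eq]
    refine Finset.sum_congr rfl fun i _ => ?_
    have h2 : (gradient (⇑f) x) i = fderiv ℝ f x (e i) := by
      have := InnerProductSpace.toDual_symm_apply (𝕜 := ℝ) (x := e i) (y := fderiv ℝ f x)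
      rw [← this]
      simp only [e, EuclideanSpace.inner_single_right]
      simp [gradient]
    have h3 : (∂_{e i} (cplx f)) x = ((fderiv ℝ f x (e i) : ℝ) : ℂ) := by
      rw [SchwartzMap.lineDerivOp_apply_eq_fderiv]
      have : HasFDerivAt (⇑(cplx f)) (Complex.ofRealCLM.comp (fderiv ℝ f x)) x :=
        Complex.ofRealCLM.hasFDerivAt.comp x f.differentiableAt.hasFDerivAt
      rw [this.fderiv]
      rfl
    rw [h2, h3]
    simp
  have h4 : ∀ i ξ, ‖𝓕 (∂_{e i} (cplx f)) ξ‖ ^ 2 =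
      (4 * Real.pi ^ 2 * ‖ξ i‖ ^ 2) * ‖𝓕 (cplx f) ξ‖ ^ 2 := by
    intro i ξ
    have : (inner ℝ · (e i)).HasTemperateGrowth := by fun_prop
    rw [SchwartzMap.fourier_lineDerivOp_eq]
    simp only [_root_.smul_apply]
    rw [SchwartzMap.smulLeftCLM_apply_apply this]
    simp [e, EuclideanSpace.inner_single_right, mul_pow]
    ring
  simp_rw [h1]
  rw [integral_finsetSum _ fun i _ => hint _]
  rw [Finset.sum_congr rfl fun i _ => (SchwartzMap.integral_norm_sq_fourier (∂_{e i} (cplx f))).symm]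
  rw [← integral_finsetSum _ fun i _ => hint _]
  congr 1
  ext ξ
  simp_rw [h4]
  rw [← Finset.sum_mul, ← Finset.mul_sum, EuclideanSpace.norm_sq_eq]

open FourierTransform LineDeriv in
lemma heat_eq {d : ℕ} (f : SchwartzMap (EuclideanSpace ℝ (Fin d)) ℝ) (t : ℝ) (ht : 0 < t) :
    ∫ x, (heatConv d t (⇑f) x) ^ 2 =
      ∫ ξ, Real.exp (-(4 * Real.pi ^ 2 * t) * ‖ξ‖ ^ 2) ^ 2 * ‖𝓕 (cplx f) ξ‖ ^ 2 := by
  have htg := gaussian_temperate (d := d) (4 * Real.pi ^ 2 * t) (by positivity)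
  let G : SchwartzMap (EuclideanSpace ℝ (Fin d)) ℂ := SchwartzMap.smulLeftCLM ℂ
    (fun ξ : EuclideanSpace ℝ (Fin d) => Real.exp (-(4 * Real.pi ^ 2 * t) * ‖ξ‖ ^ 2)) (𝓕 (cplx f))
  have hG : ∀ ξ, G ξ = (Real.exp (-(4 * Real.pi ^ 2 * t) * ‖ξ‖ ^ 2) : ℂ) * 𝓕 (cplx f) ξ := by
    intro ξ
    simp only [G]
    rw [SchwartzMap.smulLeftCLM_apply_apply htg]
    simp
  have key : ∀ x, ((heatConv d t (⇑f) x : ℝ) : ℂ) = (𝓕⁻ G) x := by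
    intro x
    have hb : 0 < ((4 * Real.pi ^ 2 * t : ℝ) : ℂ).re := by
      rw [Complex.ofReal_re]; positivity
    have J : Integrable (fun w : EuclideanSpace ℝ (Fin d) => Complex.exp
        (- ((4 * Real.pi ^ 2 * t : ℝ) : ℂ) * ‖w‖ ^ 2 +
          2 * Real.pi * Complex.I * (inner ℝ x w : ℝ))) :=
      GaussianFourier.integrable_cexp_neg_mul_sq_norm_add hb _ _
    have S := VectorFourier.integral_fourierIntegral_smul_eq_flip
      (L := innerₗ (EuclideanSpace ℝ (Fin d))) (μ := volume) (ν := volume)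
      Real.continuous_fourierChar continuous_inner (cplx f).integrable J
    have S' : ∫ ξ, 𝓕 (⇑(cplx f)) ξ * Complex.exp
        (- ((4 * Real.pi ^ 2 * t : ℝ) : ℂ) * ‖ξ‖ ^ 2 +
          2 * Real.pi * Complex.I * (inner ℝ x ξ : ℝ)) =
        ∫ y, cplx f y * 𝓕 (fun w : EuclideanSpace ℝ (Fin d) => Complex.exp
        (- ((4 * Real.pi ^ 2 * t : ℝ) : ℂ) * ‖w‖ ^ 2 +
          2 * Real.pi * Complex.I * (inner ℝ x w : ℝ))) y := by
      simpa using! S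
    rw [SchwartzMap.fourierInv_coe, Real.fourierInv_eq']
    trans ∫ ξ, 𝓕 (⇑(cplx f)) ξ * Complex.exp
        (- ((4 * Real.pi ^ 2 * t : ℝ) : ℂ) * ‖ξ‖ ^ 2 +
          2 * Real.pi * Complex.I * (inner ℝ x ξ : ℝ))
    · rw [S', heatConv, ← integral_complex_ofReal]
      congr 1
      ext y
      rw [fourier_gaussian_innerProductSpace' hb, cplx_apply, heatKernel, mul_comm]
      push_cast
      congr 2
      · rw [Complex.ofReal_cpow (by positivity), finrank_euclideanSpace_fin]
        have e1 : (Real.pi / (4 * Real.pi ^ 2 * t) : ℂ) = ((4 * Real.pi * t)⁻¹ : ℝ) := by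
          have : (Real.pi : ℂ) ≠ 0 := by exact_mod_cast Real.pi_ne_zero
          have : (t : ℂ) ≠ 0 := by exact_mod_cast ht.ne'
          push_cast
          field_simp
        have e2 : (d / 2 : ℂ) = ((d / 2 : ℝ) : ℂ) := by push_cast; rfl
        rw [e1, e2, ← Complex.ofReal_cpow (by positivity), ← Complex.ofReal_cpow (by positivity),
          Real.inv_rpow (by positivity), ← Real.rpow_neg (by positivity), neg_div]
      · congr 1
        have : (Real.pi : ℂ) ≠ 0 := by exact_mod_cast Real.pi_ne_zero
        have : (t : ℂ) ≠ 0 := by exact_mod_cast ht.ne'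
        field_simp
    · congr 1
      ext ξ
      rw [hG, SchwartzMap.fourier_coe, Complex.exp_add, real_inner_comm]
      push_cast
      simp only [smul_eq_mul]
      have : (2 * Real.pi * Complex.I * (inner ℝ ξ x : ℝ) : ℂ) =
        2 * Real.pi * (inner ℝ ξ x : ℝ) * Complex.I := by ring
      rw [this]
      ring
  have h1 : ∀ x, (heatConv d t (⇑f) x) ^ 2 = ‖(𝓕⁻ G) x‖ ^ 2 := by
    intro x
    rw [← key]
    simp
  simp_rw [h1]
  rw [← SchwartzMap.integral_norm_sq_fourier, FourierTransform.fourier_fourierInv_eq]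
  congr 1
  ext ξ
  rw [hG, norm_mul, mul_pow, Complex.norm_real, Real.norm_eq_abs, abs_of_pos (Real.exp_pos _)]

open FourierTransform in
theorem heat_short_time_dirichlet_energy (d : ℕ) (hd : 1 ≤ d)
    (f : SchwartzMap (EuclideanSpace ℝ (Fin d)) ℝ) :
    Tendsto (fun τ : ℝ =>
        ((∫ x, (heatConv d (τ / 2) (⇑f) x) ^ 2) - ∫ x, (f x) ^ 2) / τ)
      (𝓝[>] 0)
      (𝓝 (-∫ x, ‖gradient (⇑f) x‖ ^ 2)) := by
  set g := 𝓕 (cplx f) with hg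
  have hint : Integrable (fun x => ‖g x‖ ^ 2) := (g.memLp 2).integrable_norm_pow (by norm_num)
  have hint2 : Integrable (fun ξ => (4 * Real.pi ^ 2 * ‖ξ‖ ^ 2) * ‖g ξ‖ ^ 2) := by
    have h0 : (fun ξ : EuclideanSpace ℝ (Fin d) => 4 * Real.pi ^ 2 * ‖ξ‖ ^ 2).HasTemperateGrowth := by
      fun_prop
    have h := ((SchwartzMap.smulLeftCLM ℂ (fun ξ : EuclideanSpace ℝ (Fin d) =>
      4 * Real.pi ^ 2 * ‖ξ‖ ^ 2) g).memLp 2).integrable_mul (g.memLp 2)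
    refine h.norm.congr (ae_of_all _ fun ξ => ?_)
    simp only [Pi.mul_apply]
    rw [SchwartzMap.smulLeftCLM_apply_apply h0, norm_mul, norm_smul, Real.norm_eq_abs,
      abs_of_nonneg (by positivity)]
    ring
  rw [grad_eq, ← integral_neg]
  have T : Tendsto (fun τ : ℝ => ∫ ξ, ((Real.exp (-(4 * Real.pi ^ 2 * ‖ξ‖ ^ 2) * τ) - 1) / τ)
      * ‖g ξ‖ ^ 2) (𝓝[>] 0) (𝓝 (∫ ξ, -((4 * Real.pi ^ 2 * ‖ξ‖ ^ 2) * ‖g ξ‖ ^ 2))) := by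
    refine tendsto_integral_filter_of_dominated_convergence _ ?_ ?_ hint2 ?_
    · refine Eventually.of_forall fun τ => Continuous.aestronglyMeasurable ?_
      have := g.continuous
      fun_prop
    · filter_upwards [self_mem_nhdsWithin] with τ (hτ : 0 < τ)
      refine ae_of_all _ fun ξ => ?_
      have ha : 0 ≤ 4 * Real.pi ^ 2 * ‖ξ‖ ^ 2 := by positivity
      rw [norm_mul, norm_pow, norm_norm]
      gcongr
      have h1 := Real.add_one_le_exp (-(4 * Real.pi ^ 2 * ‖ξ‖ ^ 2) * τ)
      have h2 : Real.exp (-(4 * Real.pi ^ 2 * ‖ξ‖ ^ 2) * τ) ≤ 1 := by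
        rw [Real.exp_le_one_iff]; nlinarith
      rw [norm_div, Real.norm_eq_abs, Real.norm_eq_abs, abs_of_pos hτ, abs_of_nonpos (by linarith),
        div_le_iff₀ hτ]
      linarith
    · refine ae_of_all _ fun ξ => ?_
      have hd : HasDerivAt (fun τ : ℝ => Real.exp (-(4 * Real.pi ^ 2 * ‖ξ‖ ^ 2) * τ))
          (-(4 * Real.pi ^ 2 * ‖ξ‖ ^ 2)) 0 := by
        have := ((hasDerivAt_id (0:ℝ)).const_mul (-(4 * Real.pi ^ 2 * ‖ξ‖ ^ 2))).exp
        simpa using this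
      have h1 := hd.tendsto_slope_zero_right
      rw [← neg_mul (4 * Real.pi ^ 2 * ‖ξ‖ ^ 2) (‖g ξ‖ ^ 2)]
      refine Tendsto.mul_const _ (h1.congr fun τ => ?_)
      simp [div_eq_inv_mul]
  refine T.congr' ?_
  filter_upwards [self_mem_nhdsWithin] with τ (hτ : 0 < τ)
  rw [heat_eq f (τ / 2) (by positivity), norm_sq_eq, ← integral_sub _ hint, ← integral_div]
  · congr 1
    ext ξ
    rw [← Real.exp_nat_mul, ← hg]
    have : ((2:ℕ):ℝ) * (-(4 * Real.pi ^ 2 * (τ / 2)) * ‖ξ‖ ^ 2) =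
      -(4 * Real.pi ^ 2 * ‖ξ‖ ^ 2) * τ := by push_cast; ring
    rw [this]
    ring
  · refine hint.mono' ?_ (ae_of_all _ fun ξ => ?_)
    · refine Continuous.aestronglyMeasurable ?_
      have := g.continuous
      fun_prop
    · have h2 : Real.exp (-(4 * Real.pi ^ 2 * (τ / 2)) * ‖ξ‖ ^ 2) ≤ 1 := by
        rw [Real.exp_le_one_iff]
        have : 0 ≤ 4 * Real.pi ^ 2 * (τ / 2) * ‖ξ‖ ^ 2 := by positivity
        linarith
      rw [Real.norm_eq_abs, abs_of_nonneg (by positivity)]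
      exact mul_le_of_le_one_left (by positivity) (pow_le_one₀ (Real.exp_pos _).le h2)
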